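/- arXiv:1701.07434 — 3 statements merged into one kernel-verified Lean document; each statement's English description precedes it below -/
import Mathlib

section
/- Let (M, d, Γ) be a spherically complete ultrametric space, σ : M → M a contraction that is strictly contracting on orbits, and m* the unique fixed point of σ. Then for every m ∈ M, d(m, σ(m)) = d(m, m*); and for every m ≠ m*, d(σ(m), m*) < d(m, m*). -/
/-- An ultrametric on `M` with values in a linearly ordered set `Γ` with least
element `⊥` (playing the role of `0`). -/
def IsUltrametric {M : Type*} {Γ : Type*} [LinearOrder Γ] [OrderBot Γ]
    (d : M → M → Γ) : Prop :=
  (∀ m n, d m n = ⊥ ↔ m = n) ∧ (∀ m n, d m n = d n m) ∧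
  (∀ l m n, d l n ≤ max (d l m) (d m n))

/-!
The ball about `x` of radius `d x (σ x)` contains the corresponding ball about each of its points,
because `σ` is a contraction. Spherical completeness therefore bounds chains of such balls from
below, and Zorn's lemma yields a minimal one inside the ball about any given `m`. Its centre `x` is
fixed: otherwise strict contraction on orbits excludes `x` from the ball about `σ x`, which is then
strictly smaller. So the unique fixed point `m*` lies within `d m (σ m)` of `m`, while
`d m (σ m) ≤ d m m*` is the ultrametric inequality for `m`, `m*`, `σ m`. The strict inequality is
the orbit condition rewritten by this equality at `m` and at `σ m`.
-/

open Function Set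

section Preorder

variable {M Γ : Type*} [Preorder Γ] {d : M → M → Γ} {σ : M → M} {m x y : M} {r s : Γ}

/-- A pseudo-ultrametric with values in a preorder. Being within distance `r` is an equivalence
relation for every `r`: reflexivity says that self-distances are least, and transitivity is the
ultrametric inequality in a form that needs no maxima. -/
def IsPseudoUltrametric (d : M → M → Γ) : Prop :=
  ∀ r, Equivalence fun x y => d x y ≤ r

/-- The closed ball about `x` of radius `r`. -/
def distBall (d : M → M → Γ) (x : M) (r : Γ) : Set M :=
  {y | d x y ≤ r}

/-- Spherical completeness: every nonempty chain of balls has a common point. -/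
def IsSphericallyComplete (d : M → M → Γ) : Prop :=
  ∀ C : Set (Set M), C.Nonempty → (∀ B ∈ C, ∃ r x, B = distBall d x r) →
    IsChain (· ⊆ ·) C → (⋂₀ C).Nonempty

/-- A contraction in the weak sense: distances do not increase. -/
def IsContraction (d : M → M → Γ) (σ : M → M) : Prop :=
  ∀ x y, d (σ x) (σ y) ≤ d x y

/-- Strict contraction on orbits: the step from `x` to `σ x` is strictly longer than the next one,
unless `x` is fixed. -/
def IsStrictlyContractingOnOrbits (d : M → M → Γ) (σ : M → M) : Prop :=
  ∀ x, σ x = x ∨ d (σ x) (σ (σ x)) < d x (σ x)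

/-- The ball about `x` whose radius is the length of the step from `x` to `σ x`; the fixed point
is found as the centre of a minimal such ball. -/
def stepBall (d : M → M → Γ) (σ : M → M) (x : M) : Set M :=
  distBall d x (d x (σ x))

theorem IsPseudoUltrametric.distBall_subset_distBall (hd : IsPseudoUltrametric d)
    (hy : y ∈ distBall d x r) (hsr : s ≤ r) : distBall d y s ⊆ distBall d x r :=
  fun _ hz => (hd r).trans hy (hz.trans hsr)

theorem IsPseudoUltrametric.self_mem_stepBall (hd : IsPseudoUltrametric d) :
    x ∈ stepBall d σ x :=
  (hd _).refl x

theorem map_mem_stepBall : σ x ∈ stepBall d σ x :=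
  le_refl (d x (σ x))

theorem IsContraction.dist_map_le (hσ : IsContraction d σ) (hd : IsPseudoUltrametric d)
    (hxy : d x y ≤ r) (hx : d x (σ x) ≤ r) : d y (σ y) ≤ r :=
  have hyσx : d y (σ x) ≤ r := (hd r).trans ((hd r).symm hxy) hx
  (hd r).trans hyσx ((hσ x y).trans hxy)

theorem IsContraction.stepBall_subset_stepBall (hσ : IsContraction d σ)
    (hd : IsPseudoUltrametric d) (hy : y ∈ stepBall d σ x) : stepBall d σ y ⊆ stepBall d σ x :=
  hd.distBall_subset_distBall hy (hσ.dist_map_le hd hy le_rfl)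

theorem IsSphericallyComplete.exists_stepBall_subset_of_isChain (hsc : IsSphericallyComplete d)
    (hd : IsPseudoUltrametric d) (hσ : IsContraction d σ) {C : Set (Set M)}
    (hC : C ⊆ range (stepBall d σ)) (hchain : IsChain (· ⊆ ·) C) (hne : C.Nonempty) :
    ∃ z, ∀ B ∈ C, stepBall d σ z ⊆ B := by
  have hballs : ∀ B ∈ C, ∃ r x, B = distBall d x r := fun B hB =>
    let ⟨x, hx⟩ := hC hB
    ⟨d x (σ x), x, hx.symm⟩
  obtain ⟨z, hz⟩ := hsc C hne hballs hchain
  refine ⟨z, fun B hB => ?_⟩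
  obtain ⟨x, rfl⟩ := hC hB
  exact hσ.stepBall_subset_stepBall hd (hz _ hB)

theorem IsSphericallyComplete.exists_minimal_stepBall_subset (hsc : IsSphericallyComplete d)
    (hd : IsPseudoUltrametric d) (hσ : IsContraction d σ) (m : M) :
    ∃ x, stepBall d σ x ⊆ stepBall d σ m ∧
      Minimal (· ∈ range (stepBall d σ)) (stepBall d σ x) := by
  obtain ⟨_, hsub, hmin⟩ := zorn_superset_nonempty (range (stepBall d σ))
    (fun C hC hchain hne =>
      let ⟨z, hz⟩ := hsc.exists_stepBall_subset_of_isChain hd hσ hC hchain hne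
      ⟨stepBall d σ z, mem_range_self z, hz⟩)
    (stepBall d σ m) (mem_range_self m)
  obtain ⟨x, rfl⟩ := hmin.prop
  exact ⟨x, hsub, hmin⟩

theorem IsStrictlyContractingOnOrbits.isFixedPt_of_minimal_stepBall
    (horb : IsStrictlyContractingOnOrbits d σ) (hd : IsPseudoUltrametric d)
    (hσ : IsContraction d σ) (hmin : Minimal (· ∈ range (stepBall d σ)) (stepBall d σ x)) :
    IsFixedPt σ x := by
  refine (horb x).resolve_right fun hlt => ?_
  have hsub : stepBall d σ x ⊆ stepBall d σ (σ x) :=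
    hmin.le_of_le (mem_range_self (σ x)) (hσ.stepBall_subset_stepBall hd map_mem_stepBall)
  have hback : d (σ x) x ≤ d (σ x) (σ (σ x)) := hsub hd.self_mem_stepBall
  exact ((hd _).symm hback).not_gt hlt

theorem IsSphericallyComplete.exists_isFixedPt_dist_le (hsc : IsSphericallyComplete d)
    (hd : IsPseudoUltrametric d) (hσ : IsContraction d σ)
    (horb : IsStrictlyContractingOnOrbits d σ) (m : M) :
    ∃ x, IsFixedPt σ x ∧ d m x ≤ d m (σ m) := by
  obtain ⟨x, hsub, hmin⟩ := hsc.exists_minimal_stepBall_subset hd hσ m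
  exact ⟨x, horb.isFixedPt_of_minimal_stepBall hd hσ hmin, hsub hd.self_mem_stepBall⟩

theorem IsContraction.dist_map_le_dist_of_isFixedPt (hσ : IsContraction d σ)
    (hd : IsPseudoUltrametric d) (hx : IsFixedPt σ x) : d m (σ m) ≤ d m x := by
  have hstep : d x (σ x) ≤ d m x := by
    rw [hx.eq]
    exact (hd _).refl x
  exact hσ.dist_map_le hd ((hd _).symm le_rfl) hstep

end Preorder

theorem IsUltrametric.isPseudoUltrametric {M Γ : Type*} [LinearOrder Γ] [OrderBot Γ]
    {d : M → M → Γ} (hd : IsUltrametric d) : IsPseudoUltrametric d := by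
  obtain ⟨heq_bot, hsymm, htri⟩ := hd
  exact fun r =>
    { refl := fun x => ((heq_bot x x).2 rfl).trans_le bot_le
      symm := fun {x y} hxy => (hsymm y x).trans_le hxy
      trans := fun {x y z} hxy hyz => (htri x y z).trans (max_le hxy hyz) }

theorem dist_to_fixed_point_general {M Γ : Type*} [PartialOrder Γ] {d : M → M → Γ}
    (hd : IsPseudoUltrametric d) (hsc : IsSphericallyComplete d) {σ : M → M}
    (hσ : IsContraction d σ) (horb : IsStrictlyContractingOnOrbits d σ) {mstar : M}
    (hfix : IsFixedPt σ mstar) (huniq : ∀ x, IsFixedPt σ x → x = mstar) :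
    (∀ m, d m (σ m) = d m mstar) ∧ (∀ m, m ≠ mstar → d (σ m) mstar < d m mstar) := by
  have hdist (m : M) : d m (σ m) = d m mstar := by
    obtain ⟨x, hx, hmx⟩ := hsc.exists_isFixedPt_dist_le hd hσ horb m
    obtain rfl := huniq x hx
    exact (hσ.dist_map_le_dist_of_isFixedPt hd hfix).antisymm hmx
  refine ⟨hdist, fun m hm => ?_⟩
  rw [← hdist (σ m), ← hdist m]
  exact (horb m).resolve_left (mt (huniq m) hm)

/-- let `(M, d, Γ)` be a spherically complete ultrametric space,
`σ` a contraction that is strictly contracting on orbits, and `m*` the unique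
fixed point of `σ`.  Then for every `m`, `d m (σ m) = d m m*`, and for every
`m ≠ m*`, `d (σ m) m* < d m m*`. -/
theorem dist_to_fixed_point {M : Type*} {Γ : Type*}
    [LinearOrder Γ] [OrderBot Γ] (d : M → M → Γ) (hd : IsUltrametric d)
    (hsc : ∀ C : Set (Set M), C.Nonempty →
      (∀ B ∈ C, ∃ (r : Γ) (m : M), B = {n | d m n ≤ r}) →
      IsChain (· ⊆ ·) C → (⋂₀ C).Nonempty)
    (σ : M → M)
    (hcontr : ∀ m n, d (σ m) (σ n) ≤ d m n)
    (horb : ∀ m, σ m = m ∨ d (σ m) (σ (σ m)) < d m (σ m))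
    (mstar : M) (hfix : σ mstar = mstar) (huniq : ∀ x, σ x = x → x = mstar) :
    (∀ m, d m (σ m) = d m mstar) ∧
    (∀ m, m ≠ mstar → d (σ m) mstar < d m mstar) :=
  dist_to_fixed_point_general hd.isPseudoUltrametric hsc hcontr horb hfix huniq
end

section
/- Let M be a set, σ : M → M, and C_0, C_1, …, C_K subsets of M with C_0 = {m*} for some m* ∈ M, C_K = M, C_r ⊊ C_s whenever 0 ≤ r < s ≤ K, σ(m) ∈ C_r whenever m ∈ C_{r+1} (for 0 ≤ r < K), and σ(m*) = m*. Define C(m) = min{i : m ∈ C_i} and d_C(m, n) = 0 if m = n, and d_C(m, n) = max(C(m), C(n)) if m ≠ n. Then (M, d_C, {0, 1, …, K}) is an ultrametric space, and σ is a contraction that is strictly contracting on orbits with respect to d_C. -/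
/-- Index of the innermost of the sets `C i` containing `m`. -/
noncomputable def Cidx {M : Type*} (C : ℕ → Set M) (m : M) : ℕ :=
  sInf {i | m ∈ C i}

open Classical in
/-- The distance induced by a nested family of sets: `d_C m n = 0` if `m = n`,
and `d_C m n = max (C(m)) (C(n))` otherwise. -/
noncomputable def dC {M : Type*} (C : ℕ → Set M) (m n : M) : ℕ :=
  if m = n then 0 else max (Cidx C m) (Cidx C n)

/-!
The index `C(m)` vanishes only at `m*`, and `σ` strictly lowers it away from `m*`. For distinct
points `d_C` is the maximum of the two indices, so the ultrametric inequality is inherited from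
`max`, and a map that does not raise the index is a contraction. Along an orbit, `m` has the
strictly largest index of `m`, `σ m`, `σ (σ m)` unless `m = m*`, so the distance strictly drops.
-/

section Index

variable {M : Type*} {C : ℕ → Set M} {m : M}

theorem Cidx_le_of_mem {i : ℕ} (h : m ∈ C i) : Cidx C m ≤ i :=
  Nat.sInf_le h

theorem mem_Cidx_of_mem {i : ℕ} (h : m ∈ C i) : m ∈ C (Cidx C m) :=
  Nat.sInf_mem (s := {i | m ∈ C i}) ⟨i, h⟩

theorem Cidx_eq_zero_iff {i : ℕ} (h : m ∈ C i) : Cidx C m = 0 ↔ m ∈ C 0 :=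
  ⟨fun h₀ => h₀ ▸ mem_Cidx_of_mem h, fun h₀ => Nat.le_zero.1 (Cidx_le_of_mem h₀)⟩

variable {σ : M → M} {K : ℕ}

theorem Cidx_map_lt (hstep : ∀ r < K, Set.MapsTo σ (C (r + 1)) (C r))
    (hK : m ∈ C K) (h₀ : m ∉ C 0) : Cidx C (σ m) < Cidx C m := by
  obtain ⟨r, hr⟩ := Nat.exists_eq_add_one_of_ne_zero (mt (Cidx_eq_zero_iff hK).1 h₀)
  have hmem : m ∈ C (r + 1) := hr ▸ mem_Cidx_of_mem hK
  have hrK : r + 1 ≤ K := hr ▸ Cidx_le_of_mem hK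
  rw [hr]
  exact Nat.lt_succ_of_le (Cidx_le_of_mem (hstep r hrK hmem))

theorem Cidx_map_le (hzero : Set.MapsTo σ (C 0) (C 0))
    (hstep : ∀ r < K, Set.MapsTo σ (C (r + 1)) (C r)) (hK : m ∈ C K) :
    Cidx C (σ m) ≤ Cidx C m := by
  by_cases h₀ : m ∈ C 0
  · exact (Cidx_le_of_mem (hzero h₀)).trans (Nat.zero_le _)
  · exact (Cidx_map_lt hstep hK h₀).le

end Index

section Distance

variable {M : Type*} {C : ℕ → Set M}

@[simp]
theorem dC_self (m : M) : dC C m m = 0 :=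
  if_pos rfl

theorem dC_of_ne {m n : M} (h : m ≠ n) : dC C m n = max (Cidx C m) (Cidx C n) :=
  if_neg h

theorem dC_le_max_Cidx (m n : M) : dC C m n ≤ max (Cidx C m) (Cidx C n) := by
  obtain rfl | h := eq_or_ne m n
  · simp
  · exact (dC_of_ne h).le

theorem dC_comm (m n : M) : dC C m n = dC C n m := by
  obtain rfl | h := eq_or_ne m n
  · rfl
  · rw [dC_of_ne h, dC_of_ne h.symm, max_comm]

theorem dC_triangle_max (l m n : M) : dC C l n ≤ max (dC C l m) (dC C m n) := by
  obtain rfl | hlm := eq_or_ne l m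
  · exact le_max_right _ _
  obtain rfl | hmn := eq_or_ne m n
  · exact le_max_left _ _
  calc dC C l n ≤ max (Cidx C l) (Cidx C n) := dC_le_max_Cidx l n
    _ ≤ max (max (Cidx C l) (Cidx C m)) (max (Cidx C m) (Cidx C n)) :=
      max_le_max (le_max_left _ _) (le_max_right _ _)
    _ = max (dC C l m) (dC C m n) := by rw [dC_of_ne hlm, dC_of_ne hmn]

theorem dC_eq_zero_iff (h : {m | Cidx C m = 0}.Subsingleton) {m n : M} :
    dC C m n = 0 ↔ m = n := by
  refine ⟨fun hd => ?_, fun hmn => hmn ▸ dC_self m⟩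
  by_contra hmn
  rw [dC_of_ne hmn, Nat.max_eq_zero_iff] at hd
  exact hmn (h hd.1 hd.2)

theorem dC_map_le {σ : M → M} {m n : M} (hm : Cidx C (σ m) ≤ Cidx C m)
    (hn : Cidx C (σ n) ≤ Cidx C n) : dC C (σ m) (σ n) ≤ dC C m n := by
  obtain rfl | hmn := eq_or_ne m n
  · simp
  · rw [dC_of_ne hmn]
    exact (dC_le_max_Cidx _ _).trans (max_le_max hm hn)

theorem dC_lt_dC_of_Cidx_lt {k l m n : M} (hk : Cidx C k < Cidx C m)
    (hl : Cidx C l < Cidx C m) (hmn : m ≠ n) : dC C k l < dC C m n :=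
  calc dC C k l ≤ max (Cidx C k) (Cidx C l) := dC_le_max_Cidx k l
    _ < Cidx C m := max_lt hk hl
    _ ≤ max (Cidx C m) (Cidx C n) := le_max_left _ _
    _ = dC C m n := (dC_of_ne hmn).symm

end Distance

theorem ultrametric_from_boxes_general {M : Type*} (σ : M → M) (K : ℕ)
    (C : ℕ → Set M) (mstar : M)
    (hC0 : C 0 = {mstar})
    (hCK : C K = Set.univ)
    (hstep : ∀ r < K, Set.MapsTo σ (C (r + 1)) (C r))
    (hfix : σ mstar = mstar) :
    (∀ m n, dC C m n ≤ K) ∧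
    (∀ m n, dC C m n = 0 ↔ m = n) ∧
    (∀ m n, dC C m n = dC C n m) ∧
    (∀ l m n, dC C l n ≤ max (dC C l m) (dC C m n)) ∧
    (∀ m n, dC C (σ m) (σ n) ≤ dC C m n) ∧
    (∀ m, σ m = m ∨ dC C (σ m) (σ (σ m)) < dC C m (σ m)) := by
  have hK (m : M) : m ∈ C K := hCK ▸ Set.mem_univ m
  have hCidx_le (m : M) : Cidx C m ≤ K := Cidx_le_of_mem (hK m)
  have hsub : {m | Cidx C m = 0}.Subsingleton :=
    (hC0 ▸ Set.subsingleton_singleton : (C 0).Subsingleton).anti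
      fun m => (Cidx_eq_zero_iff (hK m)).1
  have hzero : Set.MapsTo σ (C 0) (C 0) := by simp [hC0, hfix]
  have hmap_le (m : M) : Cidx C (σ m) ≤ Cidx C m := Cidx_map_le hzero hstep (hK m)
  refine ⟨fun m n => (dC_le_max_Cidx m n).trans (max_le (hCidx_le m) (hCidx_le n)),
    fun _ _ => dC_eq_zero_iff hsub, dC_comm, dC_triangle_max,
    fun m n => dC_map_le (hmap_le m) (hmap_le n), fun m => or_iff_not_imp_left.2 fun hm => ?_⟩
  have hm₀ : m ∉ C 0 := by
    rw [hC0, Set.mem_singleton_iff]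
    rintro rfl
    exact hm hfix
  have hlt : Cidx C (σ m) < Cidx C m := Cidx_map_lt hstep (hK m) hm₀
  exact dC_lt_dC_of_Cidx_lt hlt ((hmap_le (σ m)).trans_lt hlt) (Ne.symm hm)

/-- given a strictly increasing chain of subsets
`C 0 = {m*} ⊊ C 1 ⊊ ⋯ ⊊ C K = M` with `σ` mapping `C (r+1)` into `C r` and
`σ m* = m*`, the function `d_C` is an ultrametric on `M` with values in
`{0, 1, …, K}`, and `σ` is a contraction that is strictly contracting on orbits
with respect to `d_C`. -/
theorem ultrametric_from_boxes {M : Type*} (σ : M → M) (K : ℕ)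
    (C : ℕ → Set M) (mstar : M)
    (hC0 : C 0 = {mstar})
    (hCK : C K = Set.univ)
    (hchain : ∀ r s, r < s → s ≤ K → C r ⊂ C s)
    (hstep : ∀ r < K, ∀ m ∈ C (r + 1), σ m ∈ C r)
    (hfix : σ mstar = mstar) :
    (∀ m n, dC C m n ≤ K) ∧
    (∀ m n, dC C m n = 0 ↔ m = n) ∧
    (∀ m n, dC C m n = dC C n m) ∧
    (∀ l m n, dC C l n ≤ max (dC C l m) (dC C m n)) ∧
    (∀ m n, dC C (σ m) (σ n) ≤ dC C m n) ∧
    (∀ m, σ m = m ∨ dC C (σ m) (σ (σ m)) < dC C m (σ m)) :=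
  ultrametric_from_boxes_general σ K C mstar hC0 hCK hstep hfix
end

section
/- With the multipath routing state space M, distance d, and best-response operator σ defined from a finite graph G with destination d and a strictly inflationary preorder ⪯ on the set 𝒫 of simple paths to d, the operator σ is a strict contraction: d(σ(m), σ(n)) < d(m, n) for all m ≠ n in M. -/
/-!
Whether a path `q` belongs to `σ x` depends only on the part of `x` strictly below `q`: the
candidates `b ⪯ q` decide whether `q` is a minimal candidate, and each of them is a one-arc
extension of some `p ∈ x`, where `p ≺ b` because the preorder is strictly inflationary. So every
path on which `σ m` and `σ n` differ lies strictly above a path on which `m` and `n` differ, and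
the latter has the larger height.
-/

/-- A simple path in the directed graph with vertex set `V` and arc relation `E`,
ending at the destination `dest`: a duplicate-free nonempty list of vertices,
consecutive vertices joined by arcs, whose last vertex is `dest`.  The empty path
`ε` at `dest` is represented by the list `[dest]`. -/
structure SimplePath (V : Type*) (E : V → V → Prop) (dest : V) where
  verts : List V
  ends : verts.getLast? = some dest
  nodup : verts.Nodup
  chain : verts.Chain' E

variable {V : Type*} {E : V → V → Prop} {dest : V}

/-- The candidate paths at node `i` given a state `x`: the simple paths of the
form `(i j) p` where `(i, j)` is an arc and `p ∈ x` is a path with source `j`. -/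
def cand (x : Set (SimplePath V E dest)) (i : V) : Set (SimplePath V E dest) :=
  {q | ∃ p ∈ x, ∃ j, p.verts.head? = some j ∧ E i j ∧ q.verts = i :: p.verts}

/-- The minimal (most preferred) elements of a set of paths, with respect to the
strict part `≺` of the preference preorder `⪯`:
`min A = {a ∈ A : no b ∈ A has b ≺ a}`. -/
def minSet {P : Type*} (pre : P → P → Prop) (A : Set P) : Set P :=
  {a | a ∈ A ∧ ∀ b ∈ A, ¬ (pre b a ∧ ¬ pre a b)}

/-- The myopic best-response operator on the multipath routing state space
(states are identified with sets of simple paths to `dest`): the component of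
`σ x` at `dest` is `{ε}`, and the component at `i ≠ dest` is the set of minimal
candidate paths at `i`. -/
def bestResp (pre : SimplePath V E dest → SimplePath V E dest → Prop)
    (x : Set (SimplePath V E dest)) : Set (SimplePath V E dest) :=
  {q | q.verts = [dest] ∨ ∃ i, i ≠ dest ∧ q ∈ minSet pre (cand x i)}

/-- The height of a path: `h p = |{q : p ⪯ q}|`, the number of paths that `p` is
weakly preferred to be below. -/
noncomputable def hval (pre : SimplePath V E dest → SimplePath V E dest → Prop)
    (p : SimplePath V E dest) : ℕ :=
  Nat.card {q : SimplePath V E dest // pre p q}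

/-- The ultrametric distance on states: the maximum of `h` over the symmetric
difference `(m \ n) ∪ (n \ m)` (equal to `0` when the symmetric difference is
empty). -/
noncomputable def pathDist (pre : SimplePath V E dest → SimplePath V E dest → Prop)
    (m n : Set (SimplePath V E dest)) : ℕ :=
  sSup (hval pre '' ((m \ n) ∪ (n \ m)))

/-- The preference preorder `⪯` is strictly inflationary: any simple path `p`
(from `j` to `dest`) is strictly preferred to any simple one-arc extension
`(i j) p` of it. -/
def StrictlyInflationary (pre : SimplePath V E dest → SimplePath V E dest → Prop) : Prop :=
  ∀ (p : SimplePath V E dest) (i j : V), p.verts.head? = some j → E i j →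
    ∀ q : SimplePath V E dest, q.verts = i :: p.verts → pre p q ∧ ¬ pre q p

open scoped symmDiff

namespace SimplePath

theorem verts_injective : Function.Injective (verts : SimplePath V E dest → List V) := by
  rintro ⟨_, _, _, _⟩ ⟨_, _, _, _⟩ rfl
  rfl

instance [Finite V] : Finite (SimplePath V E dest) := by
  classical
  have := Fintype.ofFinite V
  exact Finite.of_injective (fun p ↦ (⟨p.verts, p.nodup⟩ : {l : List V // l.Nodup}))
    fun _ _ h ↦ verts_injective (congrArg Subtype.val h)

end SimplePath

section Distance

variable [Finite (SimplePath V E dest)]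

theorem hval_strictAnti [Preorder (SimplePath V E dest)] :
    StrictAnti (hval (V := V) (E := E) (dest := dest) (· ≤ ·)) := fun _ _ hpq ↦
  Set.ncard_lt_ncard (Set.Ici_ssubset_Ici.2 hpq)

variable {pre : SimplePath V E dest → SimplePath V E dest → Prop}
  {m n : Set (SimplePath V E dest)} {p : SimplePath V E dest}

theorem hval_pos (hp : pre p p) : 0 < hval pre p :=
  have : Nonempty {q // pre p q} := ⟨⟨p, hp⟩⟩
  Nat.card_pos

theorem hval_le_pathDist (hp : p ∈ m ∆ n) : hval pre p ≤ pathDist pre m n :=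
  le_csSup (Set.toFinite _).bddAbove (Set.mem_image_of_mem _ hp)

theorem pathDist_pos (hrefl : ∀ p, pre p p) (hmn : m ≠ n) : 0 < pathDist pre m n := by
  obtain ⟨p, hp⟩ := Set.symmDiff_nonempty.2 hmn
  exact (hval_pos (hrefl p)).trans_le (hval_le_pathDist hp)

theorem pathDist_lt_iff {k : ℕ} (hk : 0 < k) :
    pathDist pre m n < k ↔ ∀ p ∈ m ∆ n, hval pre p < k := by
  refine ⟨fun h p hp ↦ (hval_le_pathDist hp).trans_lt h, fun h ↦ ?_⟩
  rcases (m ∆ n).eq_empty_or_nonempty with hempty | hne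
  · have hzero : pathDist pre m n = 0 := by
      change sSup (hval pre '' (m ∆ n)) = 0
      rw [hempty, Set.image_empty, csSup_empty, Nat.bot_eq_zero]
    rwa [hzero]
  · exact ((Set.toFinite _).csSup_lt_iff (hne.image _)).2 (Set.forall_mem_image.2 h)

end Distance

theorem mem_minSet_congr {P : Type*} [Preorder P] {A B : Set P} {a : P}
    (h : ∀ b ≤ a, b ∈ A ↔ b ∈ B) : a ∈ minSet (· ≤ ·) A ↔ a ∈ minSet (· ≤ ·) B := by
  refine and_congr (h a le_rfl) (forall_congr' fun b ↦ ?_)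
  by_cases hba : b ≤ a
  · rw [h b hba]
  · simp only [hba, false_and, not_false_eq_true, implies_true]

section BestResponse

variable [Preorder (SimplePath V E dest)] {m n : Set (SimplePath V E dest)}
  {q : SimplePath V E dest}

theorem StrictlyInflationary.lt
    (hinfl : StrictlyInflationary (V := V) (E := E) (dest := dest) (· ≤ ·))
    {p : SimplePath V E dest} {i j : V} (hj : p.verts.head? = some j) (hij : E i j)
    (hq : q.verts = i :: p.verts) : p < q :=
  lt_iff_le_not_ge.2 (hinfl p i j hj hij q hq)

theorem mem_cand_congr
    (hinfl : StrictlyInflationary (V := V) (E := E) (dest := dest) (· ≤ ·))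
    (h : ∀ p < q, p ∈ m ↔ p ∈ n) (i : V) : q ∈ cand m i ↔ q ∈ cand n i :=
  exists_congr fun p ↦ and_congr_left fun ⟨_, hj, hij, hq⟩ ↦ h p (hinfl.lt hj hij hq)

theorem mem_bestResp_congr
    (hinfl : StrictlyInflationary (V := V) (E := E) (dest := dest) (· ≤ ·))
    (h : ∀ p < q, p ∈ m ↔ p ∈ n) :
    q ∈ bestResp (· ≤ ·) m ↔ q ∈ bestResp (· ≤ ·) n :=
  or_congr_right <| exists_congr fun i ↦ and_congr_right fun _ ↦
    mem_minSet_congr fun _ hbq ↦ mem_cand_congr hinfl (fun p hpb ↦ h p (hpb.trans_le hbq)) i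

theorem exists_mem_symmDiff_lt_of_mem_symmDiff_bestResp
    (hinfl : StrictlyInflationary (V := V) (E := E) (dest := dest) (· ≤ ·))
    (hq : q ∈ bestResp (· ≤ ·) m ∆ bestResp (· ≤ ·) n) : ∃ p ∈ m ∆ n, p < q := by
  by_contra! hbelow
  have hagree : ∀ p < q, p ∈ m ↔ p ∈ n := fun p hpq ↦ by
    have hp : p ∉ m ∆ n := fun hp ↦ hbelow p hp hpq
    rw [Set.mem_symmDiff] at hp
    tauto
  rw [Set.mem_symmDiff, mem_bestResp_congr hinfl hagree] at hq
  tauto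

end BestResponse

theorem bestResp_strict_contraction_general [Finite (SimplePath V E dest)]
    (pre : SimplePath V E dest → SimplePath V E dest → Prop)
    (hrefl : ∀ p, pre p p)
    (htrans : ∀ p q r, pre p q → pre q r → pre p r)
    (hinfl : StrictlyInflationary pre) (m n : Set (SimplePath V E dest)) (hmn : m ≠ n) :
    pathDist pre (bestResp pre m) (bestResp pre n) < pathDist pre m n := by
  let _ : Preorder (SimplePath V E dest) := { le := pre, le_refl := hrefl, le_trans := htrans }
  refine (pathDist_lt_iff (pathDist_pos hrefl hmn)).2 fun q hq ↦ ?_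
  obtain ⟨p, hp, hpq⟩ := exists_mem_symmDiff_lt_of_mem_symmDiff_bestResp hinfl hq
  calc
    hval pre q < hval pre p := hval_strictAnti hpq
    _ ≤ pathDist pre m n := hval_le_pathDist hp

/-- for a finite graph with destination `dest` and a strictly
inflationary preference preorder on the simple paths to `dest`, the best-response
operator `σ` is a strict contraction with respect to the symmetric-difference
ultrametric: `d (σ m) (σ n) < d m n` for all `m ≠ n`. -/
theorem bestResp_strict_contraction {V : Type*} [Fintype V]
    {E : V → V → Prop} {dest : V}
    (pre : SimplePath V E dest → SimplePath V E dest → Prop)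
    (hrefl : ∀ p, pre p p)
    (htrans : ∀ p q r, pre p q → pre q r → pre p r)
    (hinfl : StrictlyInflationary pre) :
    ∀ m n : Set (SimplePath V E dest), m ≠ n →
      pathDist pre (bestResp pre m) (bestResp pre n) < pathDist pre m n :=
  bestResp_strict_contraction_general pre hrefl htrans hinfl
end
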